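/- arXiv:2406.15587 — 2 statements merged into one kernel-verified Lean document; each statement's English description precedes it below -/
import Mathlib

section
/- For every mu in the open interval (0.455, 0.705), the mixture p_mu := mu*p_PS(V = 1/sqrt(2), p_ps = 1/4) + (1-mu)*p_local is minimally network nonclassical in the minimal 3-chain scenario: p_mu does not belong to S0, while p_mu belongs to both S1^[AB^O BC^L] and S1^[AB^L BC^O]. -/
open Finset

/-- A correlation in the minimal 3-chain scenario: `p a b c x z = p(a,b,c|x,z)`. -/
abbrev Corr : Type := Fin 2 → Fin 2 → Fin 2 → Fin 2 → Fin 2 → ℝ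

/-- `p` is a valid correlation: nonnegative and normalized for every input pair. -/
def IsCorrelation (p : Corr) : Prop :=
  (∀ a b c x z, 0 ≤ p a b c x z) ∧
  (∀ x z, ∑ a : Fin 2, ∑ b : Fin 2, ∑ c : Fin 2, p a b c x z = 1)

/-- Probability weights on the finite set `Fin n`. -/
def IsWeights {n : ℕ} (q : Fin n → ℝ) : Prop :=
  (∀ l, 0 ≤ q l) ∧ ∑ l, q l = 1

/-- A no-signalling box with binary outputs and input sets `X`, `Y`. -/
def IsNSBox {X Y : Type} [Fintype X] [Fintype Y]
    (nb : Fin 2 → Fin 2 → X → Y → ℝ) : Prop :=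
  (∀ o1 o2 x y, 0 ≤ nb o1 o2 x y) ∧
  (∀ x y, ∑ o1 : Fin 2, ∑ o2 : Fin 2, nb o1 o2 x y = 1) ∧
  (∀ o1 x y y', ∑ o2 : Fin 2, nb o1 o2 x y = ∑ o2 : Fin 2, nb o1 o2 x y') ∧
  (∀ o2 x x' y, ∑ o1 : Fin 2, nb o1 o2 x y = ∑ o1 : Fin 2, nb o1 o2 x' y)

/-- `S0`: classical 3-chain correlations. -/
def MemS0 (p : Corr) : Prop :=
  ∃ (n1 n2 : ℕ) (q1 : Fin n1 → ℝ) (q2 : Fin n2 → ℝ)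
    (pA : Fin 2 → Fin 2 → Fin n1 → ℝ)
    (pB : Fin 2 → Fin n1 → Fin n2 → ℝ)
    (pC : Fin 2 → Fin 2 → Fin n2 → ℝ),
    IsWeights q1 ∧ IsWeights q2 ∧
    (∀ a x l1, 0 ≤ pA a x l1) ∧ (∀ x l1, ∑ a : Fin 2, pA a x l1 = 1) ∧
    (∀ b l1 l2, 0 ≤ pB b l1 l2) ∧ (∀ l1 l2, ∑ b : Fin 2, pB b l1 l2 = 1) ∧
    (∀ c z l2, 0 ≤ pC c z l2) ∧ (∀ z l2, ∑ c : Fin 2, pC c z l2 = 1) ∧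
    (∀ a b c x z, p a b c x z =
      ∑ l1, ∑ l2, q1 l1 * q2 l2 * pA a x l1 * pB b l1 l2 * pC c z l2)

/-- `S1^[AB^O BC^L]`: a no-signalling (OPT) source between Alice and Bob,
a classical source between Bob and Charlie. -/
def MemS1ABo (p : Corr) : Prop :=
  ∃ (n : ℕ) (q : Fin n → ℝ)
    (nb : Fin 2 → Fin 2 → Fin 2 → Fin n → ℝ)
    (pC : Fin 2 → Fin 2 → Fin n → ℝ),
    IsWeights q ∧ IsNSBox nb ∧
    (∀ c z l, 0 ≤ pC c z l) ∧ (∀ z l, ∑ c : Fin 2, pC c z l = 1) ∧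
    (∀ a b c x z, p a b c x z = ∑ l, q l * nb a b x l * pC c z l)

/-- `S1^[AB^L BC^O]`: a classical source between Alice and Bob,
a no-signalling (OPT) source between Bob and Charlie. -/
def MemS1BCo (p : Corr) : Prop :=
  ∃ (n : ℕ) (q : Fin n → ℝ)
    (pA : Fin 2 → Fin 2 → Fin n → ℝ)
    (nb : Fin 2 → Fin 2 → Fin n → Fin 2 → ℝ),
    IsWeights q ∧
    (∀ a x l, 0 ≤ pA a x l) ∧ (∀ x l, ∑ a : Fin 2, pA a x l = 1) ∧
    IsNSBox nb ∧
    (∀ a b c x z, p a b c x z = ∑ l, q l * pA a x l * nb b c l z)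

/-- `S2`: the no-signalling constraints of the 3-chain network. -/
def MemS2 (p : Corr) : Prop :=
  (∃ (pA : Fin 2 → Fin 2 → ℝ) (pC : Fin 2 → Fin 2 → ℝ),
    (∀ a x, 0 ≤ pA a x) ∧ (∀ x, ∑ a : Fin 2, pA a x = 1) ∧
    (∀ c z, 0 ≤ pC c z) ∧ (∀ z, ∑ c : Fin 2, pC c z = 1) ∧
    (∀ a c x z, ∑ b : Fin 2, p a b c x z = pA a x * pC c z)) ∧
  (∀ a b x z z', ∑ c : Fin 2, p a b c x z = ∑ c : Fin 2, p a b c x z') ∧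
  (∀ b c x x' z, ∑ a : Fin 2, p a b c x z = ∑ a : Fin 2, p a b c x' z)

/-- Noisy PR-box correlation `p_PR(V)(a,c|x,z) = (1 + V(-1)^{a+c+x·z})/4`. -/
noncomputable def pPR (V : ℝ) (a c x z : Fin 2) : ℝ :=
  (1 + V * (-1 : ℝ) ^ ((a : ℕ) + (c : ℕ) + (x : ℕ) * (z : ℕ))) / 4

/-- Post-selection box `p_PS(V, p_ps)`: outcome `b = 0` carries `p_ps · p_PR(V)`. -/
noncomputable def pPSbox (V pps : ℝ) : Corr := fun a b c x z =>
  if b = 0 then pps * pPR V a c x z else 1/4 - pps * pPR V a c x z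

/-- The local Bell-test correlation `p_local(a,b,c|x,z) = (1/2)·w(a,b|x,c)`. -/
noncomputable def pLocal : Corr := fun a b c x _z =>
  (1/2) * (if x ≠ c then (1/4 : ℝ) else if a = b then 1/2 else 0)

/-- The mixture `p_μ = μ·p_PS(V, 1/4) + (1-μ)·p_local`. -/
noncomputable def pMix (V μ : ℝ) : Corr := fun a b c x z =>
  μ * pPSbox V (1/4) a b c x z + (1 - μ) * pLocal a b c x z

/-- A sum of products over two independent classical sources factorizes. -/
lemma sum_sum_weights_mul {n1 n2 : ℕ} (q1 f : Fin n1 → ℝ) (q2 g : Fin n2 → ℝ) :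
    ∑ l1, ∑ l2, q1 l1 * q2 l2 * (f l1 * g l2) = (∑ l1, q1 l1 * f l1) * ∑ l2, q2 l2 * g l2 := by
  rw [Finset.sum_mul_sum]
  exact Finset.sum_congr rfl fun _ _ => Finset.sum_congr rfl fun _ _ => by ring

/-- Classical 3-chain correlations in which Alice and Charlie have uniform marginals satisfy three
inequalities, in which `r` and `t` are the probabilities that the two potential outcomes of Alice,
respectively of Charlie, both vanish. -/
lemma MemS0.exists_bounds {p : Corr} (hp : MemS0 p)
    (hA : ∀ x, ∑ b, ∑ c, p 0 b c x 0 = 1 / 2) (hC : ∀ z, ∑ a, ∑ b, p a b 0 0 z = 1 / 2) :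
    ∃ r t : ℝ, 0 ≤ r ∧ r ≤ 1 / 2 ∧
      p 0 0 0 1 0 - p 1 0 0 0 0 ≤ r * (1 / 2) ∧
      p 0 0 1 1 1 - p 0 0 1 0 1 - p 1 0 0 0 0 ≤ (1 / 2 - r) * t ∧
      p 0 0 0 1 0 - p 0 0 0 1 1 - p 1 0 0 0 0 ≤ r * (1 / 2 - t) := by
  obtain ⟨n1, n2, q1, q2, pA, pB, pC, ⟨hq1, hs1⟩, ⟨hq2, hs2⟩, hA0, hA1, hB0, hB1, hC0, hC1, h⟩ := hp
  have hA' : ∀ x l, pA 1 x l = 1 - pA 0 x l := fun x l => by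
    have := hA1 x l
    rw [Fin.sum_univ_two] at this
    linarith
  have hB' : ∀ l l', pB 1 l l' = 1 - pB 0 l l' := fun l l' => by
    have := hB1 l l'
    rw [Fin.sum_univ_two] at this
    linarith
  have hC' : ∀ z l, pC 1 z l = 1 - pC 0 z l := fun z l => by
    have := hC1 z l
    rw [Fin.sum_univ_two] at this
    linarith
  have hEA : ∀ x, ∑ l, q1 l * pA 0 x l = 1 / 2 := fun x => by
    rw [← hA x, ← mul_one (∑ l, _), ← hs2, ← Finset.sum_congr rfl fun l _ => mul_one (q2 l),
      ← sum_sum_weights_mul]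
    simp only [Fin.sum_univ_two, h, ← Finset.sum_add_distrib, hB', hC']
    exact Finset.sum_congr rfl fun _ _ => Finset.sum_congr rfl fun _ _ => by ring
  have hEC : ∀ z, ∑ l, q2 l * pC 0 z l = 1 / 2 := fun z => by
    rw [← hC z, ← one_mul (∑ l, _), ← hs1, ← Finset.sum_congr rfl fun l _ => mul_one (q1 l),
      ← sum_sum_weights_mul]
    simp only [Fin.sum_univ_two, h, ← Finset.sum_add_distrib, hB', hA']
    exact Finset.sum_congr rfl fun _ _ => Finset.sum_congr rfl fun _ _ => by ring
  set r := ∑ l, q1 l * (pA 0 0 l * pA 0 1 l) with hr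
  set t := ∑ l, q2 l * (pC 0 0 l * pC 0 1 l) with ht
  have hr' : ∑ l, q1 l * (pA 1 0 l * pA 0 1 l) = 1 / 2 - r := by
    rw [← hEA 1, hr, ← Finset.sum_sub_distrib]
    exact Finset.sum_congr rfl fun _ _ => by rw [hA']; ring
  have ht' : ∑ l, q2 l * (pC 0 0 l * pC 1 1 l) = 1 / 2 - t := by
    rw [← hEC 0, ht, ← Finset.sum_sub_distrib]
    exact Finset.sum_congr rfl fun _ _ => by rw [hC']; ring
  have ht'' : ∑ l, q2 l * (pC 1 0 l * pC 1 1 l) = t := by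
    have : t = ∑ l, q2 l - ∑ l, q2 l * pC 0 0 l - ∑ l, q2 l * pC 0 1 l + t := by
      rw [hs2, hEC, hEC]; ring
    rw [this, ht, ← Finset.sum_sub_distrib, ← Finset.sum_sub_distrib, ← Finset.sum_add_distrib]
    exact Finset.sum_congr rfl fun _ _ => by rw [hC', hC']; ring
  have hB01 : ∀ l l', pB 0 l l' ≤ 1 := fun l l' => by linarith [hB' l l', hB0 1 l l']
  refine ⟨r, t, ?_, ?_, ?_, ?_, ?_⟩
  · exact Finset.sum_nonneg fun l _ => mul_nonneg (hq1 l) (mul_nonneg (hA0 _ _ _) (hA0 _ _ _))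
  · have : 0 ≤ ∑ l, q1 l * (pA 1 0 l * pA 0 1 l) :=
      Finset.sum_nonneg fun l _ => mul_nonneg (hq1 l) (mul_nonneg (hA0 _ _ _) (hA0 _ _ _))
    linarith
  · rw [← hEC 0, ← sum_sum_weights_mul]
    simp only [h, ← Finset.sum_sub_distrib]
    refine Finset.sum_le_sum fun l _ => Finset.sum_le_sum fun l' _ => ?_
    have hq := mul_nonneg (hq1 l) (hq2 l')
    have key : pB 0 l l' * (pA 0 1 l * pC 0 0 l' - pA 1 0 l * pC 0 0 l') ≤
        pA 0 0 l * pA 0 1 l * pC 0 0 l' := by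
      have e1 := mul_nonneg (mul_nonneg (mul_nonneg (hA0 0 0 l) (hA0 0 1 l)) (hC0 0 0 l'))
        (sub_nonneg.2 (hB01 l l'))
      have e2 := mul_nonneg (mul_nonneg (mul_nonneg (hA0 1 0 l) (hA0 1 1 l)) (hC0 0 0 l'))
        (hB0 0 l l')
      rw [hA' 1] at e2
      rw [hA' 0] at e2 ⊢
      linarith
    linarith [mul_le_mul_of_nonneg_left key hq]
  · rw [← ht'', ← hr', ← sum_sum_weights_mul]
    simp only [h, ← Finset.sum_sub_distrib]
    refine Finset.sum_le_sum fun l _ => Finset.sum_le_sum fun l' _ => ?_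
    have hq := mul_nonneg (hq1 l) (hq2 l')
    have key : pB 0 l l' *
        (pA 0 1 l * pC 1 1 l' - pA 0 0 l * pC 1 1 l' - pA 1 0 l * pC 0 0 l') ≤
        pA 1 0 l * pA 0 1 l * (pC 1 0 l' * pC 1 1 l') := by
      have e1 := mul_nonneg (mul_nonneg (mul_nonneg (hA0 1 0 l) (hA0 0 1 l))
        (mul_nonneg (hC0 1 0 l') (hC0 1 1 l'))) (sub_nonneg.2 (hB01 l l'))
      have e2 := mul_nonneg (mul_nonneg (mul_nonneg (hA0 0 0 l) (hA0 1 1 l)) (hC0 1 1 l'))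
        (hB0 0 l l')
      have e3 := mul_nonneg (mul_nonneg (mul_nonneg (hA0 1 0 l) (hA0 1 1 l))
        (mul_nonneg (hC0 0 0 l') (hC0 1 1 l'))) (hB0 0 l l')
      have e4 := mul_nonneg (mul_nonneg (mul_nonneg (hA0 1 0 l) (hC0 0 0 l')) (hC0 0 1 l'))
        (hB0 0 l l')
      simp only [hA', hC'] at e1 e2 e3 e4 ⊢
      linarith
    linarith [mul_le_mul_of_nonneg_left key hq]
  · rw [← ht', ← sum_sum_weights_mul]
    simp only [h, ← Finset.sum_sub_distrib]
    refine Finset.sum_le_sum fun l _ => Finset.sum_le_sum fun l' _ => ?_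
    have hq := mul_nonneg (hq1 l) (hq2 l')
    have key : pB 0 l l' *
        (pA 0 1 l * pC 0 0 l' - pA 0 1 l * pC 0 1 l' - pA 1 0 l * pC 0 0 l') ≤
        pA 0 0 l * pA 0 1 l * (pC 0 0 l' * pC 1 1 l') := by
      have e1 := mul_nonneg (mul_nonneg (mul_nonneg (hA0 0 0 l) (hA0 0 1 l))
        (mul_nonneg (hC0 0 0 l') (hC0 1 1 l'))) (sub_nonneg.2 (hB01 l l'))
      have e2 := mul_nonneg (mul_nonneg (mul_nonneg (hA0 0 1 l) (hC0 1 0 l')) (hC0 0 1 l'))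
        (hB0 0 l l')
      have e3 := mul_nonneg (mul_nonneg (mul_nonneg (hA0 1 0 l) (hA0 1 1 l))
        (mul_nonneg (hC0 0 0 l') (hC0 1 1 l'))) (hB0 0 l l')
      have e4 := mul_nonneg (mul_nonneg (mul_nonneg (hA0 1 0 l) (hC0 0 0 l')) (hC0 0 1 l'))
        (hB0 0 l l')
      simp only [hA', hC'] at e1 e2 e3 e4 ⊢
      linarith
    linarith [mul_le_mul_of_nonneg_left key hq]

/-- The sign `(-1) ^ i` of a bit. -/
def bitSign : Fin 2 → ℝ := ![1, -1]

/-- The outcome on input `i` of the deterministic strategy number `l`. -/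
def strategyBit (i : Fin 2) (l : Fin 4) : Fin 2 := ![![0, 0, 1, 1], ![0, 1, 0, 1]] i l

/-- The response function of the deterministic strategy number `l`. -/
def strategyResponse (o i : Fin 2) (l : Fin 4) : ℝ := if o = strategyBit i l then 1 else 0

/-- The joint distribution of an unbiased outcome `o` and a bit `b` with `P(b = 0) = β` and
correlation `η`. -/
noncomputable def unbiasedBox (β η : ℝ) (o b : Fin 2) : ℝ :=
  if b = 0 then (β + bitSign o * η) / 2 else (1 - β - bitSign o * η) / 2

lemma strategyResponse_nonneg (o i : Fin 2) (l : Fin 4) : 0 ≤ strategyResponse o i l := by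
  unfold strategyResponse
  split_ifs <;> norm_num

lemma sum_strategyResponse (i : Fin 2) (l : Fin 4) : ∑ o, strategyResponse o i l = 1 := by
  simp [strategyResponse]

lemma isWeights_quarter : IsWeights (fun _ : Fin 4 => (1 / 4 : ℝ)) :=
  ⟨fun _ => by norm_num, by simp⟩

lemma unbiasedBox_nonneg {β η : ℝ} (h : |η| ≤ β) (h' : |η| ≤ 1 - β) (o b : Fin 2) :
    0 ≤ unbiasedBox β η o b := by
  rw [abs_le] at h h'
  unfold unbiasedBox bitSign
  fin_cases o <;> fin_cases b <;> simp <;> linarith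

lemma sum_unbiasedBox_right (β η : ℝ) (o : Fin 2) : ∑ b, unbiasedBox β η o b = 1 / 2 := by
  simp [Fin.sum_univ_two, unbiasedBox]
  ring

lemma sum_unbiasedBox_left (β η : ℝ) (b : Fin 2) :
    ∑ o, unbiasedBox β η o b = if b = 0 then β else 1 - β := by
  fin_cases b <;> simp [Fin.sum_univ_two, unbiasedBox, bitSign] <;> ring

lemma memS1ABo_of_unbiasedBox {p : Corr} (β : Fin 4 → ℝ) (η : Fin 2 → Fin 4 → ℝ)
    (h : ∀ x l, |η x l| ≤ β l) (h' : ∀ x l, |η x l| ≤ 1 - β l)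
    (hp : ∀ a b c x z, p a b c x z =
      ∑ l, 1 / 4 * unbiasedBox (β l) (η x l) a b * strategyResponse c z l) :
    MemS1ABo p := by
  refine ⟨4, fun _ => 1 / 4, fun a b x l => unbiasedBox (β l) (η x l) a b, strategyResponse,
    isWeights_quarter, ⟨fun a b x l => unbiasedBox_nonneg (h x l) (h' x l) a b, ?_, ?_, ?_⟩,
    strategyResponse_nonneg, sum_strategyResponse, hp⟩ <;> intros
  · simp only [sum_unbiasedBox_right]
    norm_num
  · simp only [sum_unbiasedBox_right]
  · simp only [sum_unbiasedBox_left]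

lemma memS1BCo_of_unbiasedBox {p : Corr} (β : Fin 4 → ℝ) (η : Fin 2 → Fin 4 → ℝ)
    (h : ∀ z l, |η z l| ≤ β l) (h' : ∀ z l, |η z l| ≤ 1 - β l)
    (hp : ∀ a b c x z, p a b c x z =
      ∑ l, 1 / 4 * strategyResponse a x l * unbiasedBox (β l) (η z l) c b) :
    MemS1BCo p := by
  refine ⟨4, fun _ => 1 / 4, strategyResponse, fun b c l z => unbiasedBox (β l) (η z l) c b,
    isWeights_quarter, strategyResponse_nonneg, sum_strategyResponse,
    ⟨fun b c l z => unbiasedBox_nonneg (h z l) (h' z l) c b, ?_, ?_, ?_⟩, hp⟩ <;> intros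
  · rw [Finset.sum_comm]
    simp only [sum_unbiasedBox_right]
    norm_num
  · simp only [sum_unbiasedBox_left]
  · simp only [sum_unbiasedBox_right]

lemma memS1ABo_pMix {V μ : ℝ} (h0 : 0 ≤ μ) (h1 : μ ≤ 1) (hV : 1 / 2 ≤ V) (hV1 : V ≤ 1)
    (hμ : μ * V ≤ 1 / 2) : MemS1ABo (pMix V μ) := by
  have hu0 : μ * (1 / 2) ≤ μ * V := mul_le_mul_of_nonneg_left hV h0
  have hu1 : μ * V ≤ μ * 1 := mul_le_mul_of_nonneg_left hV1 h0
  refine memS1ABo_of_unbiasedBox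
    ![(1 - μ + μ * V) / 2, (1 - μ * V) / 2, (1 - μ * V) / 2, (1 - μ + μ * V) / 2]
    ![![(1 - μ + μ * V) / 2, (1 - μ) / 2, (1 - μ) / 2, -(1 - μ + μ * V) / 2],
      ![μ * V - 1 / 2, (1 - μ * V) / 2, (1 - 3 * (μ * V)) / 2, 1 / 2 - μ + μ * V]] ?_ ?_ ?_
  · intro i l
    rw [abs_le]
    fin_cases i <;> fin_cases l <;> constructor <;> simp <;> linarith
  · intro i l
    rw [abs_le]
    fin_cases i <;> fin_cases l <;> constructor <;> simp <;> linarith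
  · intro a b c x z
    fin_cases a <;> fin_cases b <;> fin_cases c <;> fin_cases x <;> fin_cases z <;>
      simp [Fin.sum_univ_four, unbiasedBox, strategyResponse, strategyBit, bitSign,
        pMix, pPSbox, pPR, pLocal] <;> ring

lemma memS1BCo_pMix {V μ : ℝ} (h0 : 0 ≤ μ) (h1 : μ ≤ 1) (hV : 1 / 2 ≤ V) (hV1 : V ≤ 1)
    (hμ : μ * V ≤ 1 / 2) : MemS1BCo (pMix V μ) := by
  have hu0 : μ * (1 / 2) ≤ μ * V := mul_le_mul_of_nonneg_left hV h0
  have hu1 : μ * V ≤ μ * 1 := mul_le_mul_of_nonneg_left hV1 h0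
  refine memS1BCo_of_unbiasedBox
    ![(2 - μ - μ * V) / 2, (1 - μ + μ * V) / 2, (1 - μ + μ * V) / 2, (μ - μ * V) / 2]
    ![![(3 * (μ * V) - μ) / 2, (1 - 2 * (μ * V)) / 2, (2 * μ - 1 - 2 * (μ * V)) / 2,
        (μ * V - μ) / 2],
      ![0, (1 - μ + μ * V) / 2, -(1 - μ + μ * V) / 2, 0]] ?_ ?_ ?_
  · intro i l
    rw [abs_le]
    fin_cases i <;> fin_cases l <;> constructor <;> simp <;> linarith
  · intro i l
    rw [abs_le]
    fin_cases i <;> fin_cases l <;> constructor <;> simp <;> linarith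
  · intro a b c x z
    fin_cases a <;> fin_cases b <;> fin_cases c <;> fin_cases x <;> fin_cases z <;>
      simp [Fin.sum_univ_four, unbiasedBox, strategyResponse, strategyBit, bitSign,
        pMix, pPSbox, pPR, pLocal] <;> ring

lemma not_memS0_pMix {V μ : ℝ} (hV0 : 0 < V) (hV : V ^ 2 = 1 / 2) (h1 : 0.455 < μ)
    (h2 : μ < 0.705) : ¬ MemS0 (pMix V μ) := by
  intro h
  have hlo : 0.7071 < V := by nlinarith
  have hhi : V < 0.70711 := by nlinarith
  obtain ⟨r, t, hr0, hr1, i1, i2, i3⟩ := h.exists_bounds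
    (fun x => by
      fin_cases x <;> simp [Fin.sum_univ_two, pMix, pPSbox, pPR, pLocal] <;> ring)
    (fun z => by
      fin_cases z <;> simp [Fin.sum_univ_two, pMix, pPSbox, pPR, pLocal] <;> ring)
  simp [pMix, pPSbox, pPR, pLocal] at i1 i2 i3
  have hα : 0 ≤ 4 * r - 1 + μ * (1 - V) := by linarith
  have hquad : μ * (3 * V - 2) + (1 - μ) * (4 * r - 1) + (4 * r - 1) ^ 2 ≤ 0 := by
    nlinarith [mul_le_mul_of_nonneg_left i2 hr0,
      mul_le_mul_of_nonneg_left i3 (sub_nonneg.2 hr1)]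
  rcases le_total μ 0.63 with hμ | hμ
  · have e1 : 0 < μ * ((4 * V - 3) + μ * ((1 - V) * (2 - V))) := by
      apply mul_pos (by linarith)
      nlinarith
    have e2 : 0 ≤ 1 - μ - 2 * (μ * (1 - V)) := by nlinarith
    nlinarith [mul_nonneg hα e2, sq_nonneg (4 * r - 1 + μ * (1 - V))]
  · nlinarith [sq_nonneg (4 * r - 1 + (1 - μ) / 2)]

/-- for `μ ∈ (0.455, 0.705)`, the mixture
`p_μ = μ·p_PS(1/√2, 1/4) + (1-μ)·p_local` is minimally network nonclassical. -/
theorem mix_quantum_MNN (μ : ℝ) (h1 : (0.455 : ℝ) < μ) (h2 : μ < (0.705 : ℝ)) :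
    ¬ MemS0 (pMix (Real.sqrt 2)⁻¹ μ) ∧
    MemS1ABo (pMix (Real.sqrt 2)⁻¹ μ) ∧ MemS1BCo (pMix (Real.sqrt 2)⁻¹ μ) := by 
  have hs : (√2)⁻¹ ^ 2 = (1 / 2 : ℝ) := by
    rw [inv_pow, Real.sq_sqrt (by norm_num)]
    norm_num
  have hs0 : 0 < (√2 : ℝ)⁻¹ := by positivity
  have hlo : 1 / 2 ≤ (√2 : ℝ)⁻¹ := by nlinarith
  have hhi : (√2 : ℝ)⁻¹ < 0.70711 := by nlinarith
  have hμ : μ * (√2)⁻¹ ≤ 1 / 2 := by nlinarith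
  exact ⟨not_memS0_pMix hs0 hs h1 h2,
    memS1ABo_pMix (by linarith) (by linarith) hlo (by linarith) hμ,
    memS1BCo_pMix (by linarith) (by linarith) hlo (by linarith) hμ⟩
end

section
/- For every mu in the open interval (0, 0.5), the mixture p_mu := mu*p_PS(V = 1, p_ps = 1/4) + (1-mu)*p_local is minimally network nonclassical in the minimal 3-chain scenario: p_mu does not belong to S0, while p_mu belongs to both S1^[AB^O BC^L] and S1^[AB^L BC^O]. -/
open Finset

/-- The sign `(-1)^o` of a binary outcome. -/
def outcomeSign (o : Fin 2) : ℝ := if o = 0 then 1 else -1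

/-- The distribution of two binary outcomes with correlator `E` in which the outcome `o1` is
unbiased and the outcome `o2` has expectation `m`. -/
noncomputable def corrBox (m E : ℝ) (o1 o2 : Fin 2) : ℝ :=
  (1 + m * outcomeSign o2 + E * (outcomeSign o1 * outcomeSign o2)) / 4

lemma corrBox_nonneg {m E : ℝ} (h : |m| + |E| ≤ 1) (o1 o2 : Fin 2) : 0 ≤ corrBox m E o1 o2 := by
  have hm := abs_le.1 (le_refl |m|)
  have hE := abs_le.1 (le_refl |E|)
  fin_cases o1 <;> fin_cases o2 <;> simp [corrBox, outcomeSign] <;> linarith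

/-- A family of boxes with an unbiased first outcome is no-signalling as soon as the bias of the
second outcome depends on the second input only. -/
lemma isNSBox_corrBox {X Y : Type} [Fintype X] [Fintype Y] {m : Y → ℝ} {E : X → Y → ℝ}
    (h : ∀ x y, |m y| + |E x y| ≤ 1) :
    IsNSBox (fun o1 o2 x y => corrBox (m y) (E x y) o1 o2) := by
  refine ⟨fun o1 o2 x y => corrBox_nonneg (h x y) o1 o2, ?_, ?_, ?_⟩
  · intro x y
    simp [Fin.sum_univ_two, corrBox, outcomeSign]
    ring
  · intro o1 x y y'
    simp [Fin.sum_univ_two, corrBox, outcomeSign]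
    ring
  · intro o2 x x' y
    simp [Fin.sum_univ_two, corrBox, outcomeSign]
    split_ifs <;> ring

lemma IsNSBox.swap {X Y : Type} [Fintype X] [Fintype Y] {nb : Fin 2 → Fin 2 → X → Y → ℝ}
    (h : IsNSBox nb) : IsNSBox (fun o1 o2 y x => nb o2 o1 x y) := by
  obtain ⟨h0, hsum, hl, hr⟩ := h
  refine ⟨fun o1 o2 y x => h0 o2 o1 x y, fun y x => ?_, fun o1 y x x' => hr o1 x x' y,
    fun o2 y y' x => hl o2 x y y'⟩
  rw [Finset.sum_comm]
  exact hsum x y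

/-- The four deterministic responses to a binary input `x`, as conditional distributions of the
binary outcome `o`. -/
def detResponse (o x : Fin 2) (l : Fin 4) : ℝ :=
  if (![![0, 0, 1, 1], ![0, 1, 0, 1]] : Fin 2 → Fin 4 → Fin 2) x l = o then 1 else 0

lemma detResponse_nonneg (o x : Fin 2) (l : Fin 4) : 0 ≤ detResponse o x l := by
  unfold detResponse
  split_ifs <;> norm_num

lemma sum_detResponse (x : Fin 2) (l : Fin 4) : ∑ o : Fin 2, detResponse o x l = 1 := by
  simp [detResponse]

/-- A classical chain correlation extends to a joint distribution `F a₀ a₁ b c₀ c₁` of Bob's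
outcome and of all the outcomes Alice and Charlie would give to each of their inputs, in which
the outcomes of Alice are independent of those of Charlie. -/
lemma MemS0.exists_joint {p : Corr} (h : MemS0 p) :
    ∃ (Q1 Q2 : Fin 2 → Fin 2 → ℝ) (F : Fin 2 → Fin 2 → Fin 2 → Fin 2 → Fin 2 → ℝ),
      (∀ a0 a1, 0 ≤ Q1 a0 a1) ∧ (∀ c0 c1, 0 ≤ Q2 c0 c1) ∧
      ∑ a0, ∑ a1, Q1 a0 a1 = 1 ∧ ∑ c0, ∑ c1, Q2 c0 c1 = 1 ∧
      (∀ a0 a1 b c0 c1, 0 ≤ F a0 a1 b c0 c1) ∧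
      (∀ a0 a1 c0 c1, ∑ b, F a0 a1 b c0 c1 = Q1 a0 a1 * Q2 c0 c1) ∧
      (∀ a b c, p a b c 0 0 = ∑ a1, ∑ c1, F a a1 b c c1) ∧
      (∀ a b c, p a b c 0 1 = ∑ a1, ∑ c0, F a a1 b c0 c) ∧
      (∀ a b c, p a b c 1 0 = ∑ a0, ∑ c1, F a0 a b c c1) ∧
      (∀ a b c, p a b c 1 1 = ∑ a0, ∑ c0, F a0 a b c0 c) := by
  obtain ⟨n1, n2, q1, q2, pA, pB, pC, ⟨hq1, hq1s⟩, ⟨hq2, hq2s⟩, hA, hAs, hB, hBs, hC, hCs, hp⟩ := h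
  simp only [Fin.sum_univ_two] at hAs hBs hCs
  refine ⟨fun a0 a1 => ∑ l1, q1 l1 * pA a0 0 l1 * pA a1 1 l1,
    fun c0 c1 => ∑ l2, q2 l2 * pC c0 0 l2 * pC c1 1 l2,
    fun a0 a1 b c0 c1 => ∑ l1, ∑ l2, q1 l1 * q2 l2 * (pA a0 0 l1 * pA a1 1 l1) * pB b l1 l2 *
      (pC c0 0 l2 * pC c1 1 l2), ?_, ?_, ?_, ?_, ?_, ?_, ?_, ?_, ?_, ?_⟩
  · exact fun a0 a1 => sum_nonneg fun l _ => mul_nonneg (mul_nonneg (hq1 l) (hA _ _ _)) (hA _ _ _)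
  · exact fun a0 a1 => sum_nonneg fun l _ => mul_nonneg (mul_nonneg (hq2 l) (hC _ _ _)) (hC _ _ _)
  · rw [← hq1s]
    simp only [Fin.sum_univ_two, ← sum_add_distrib]
    refine sum_congr rfl fun l _ => ?_
    linear_combination (q1 l * (pA 0 0 l + pA 1 0 l)) * hAs 1 l + q1 l * hAs 0 l
  · rw [← hq2s]
    simp only [Fin.sum_univ_two, ← sum_add_distrib]
    refine sum_congr rfl fun l _ => ?_
    linear_combination (q2 l * (pC 0 0 l + pC 1 0 l)) * hCs 1 l + q2 l * hCs 0 l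
  · exact fun a0 a1 b c0 c1 => sum_nonneg fun l1 _ => sum_nonneg fun l2 _ =>
      mul_nonneg (mul_nonneg (mul_nonneg (mul_nonneg (hq1 _) (hq2 _))
        (mul_nonneg (hA _ _ _) (hA _ _ _))) (hB _ _ _)) (mul_nonneg (hC _ _ _) (hC _ _ _))
  · intro a0 a1 c0 c1
    rw [sum_mul_sum]
    simp only [Fin.sum_univ_two, ← sum_add_distrib]
    refine sum_congr rfl fun l1 _ => sum_congr rfl fun l2 _ => ?_
    linear_combination (q1 l1 * q2 l2 * (pA a0 0 l1 * pA a1 1 l1) *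
      (pC c0 0 l2 * pC c1 1 l2)) * hBs l1 l2
  all_goals
    intro a b c
    rw [hp]
    simp only [Fin.sum_univ_two, ← sum_add_distrib]
    refine sum_congr rfl fun l1 _ => sum_congr rfl fun l2 _ => ?_
  · linear_combination (-q1 l1 * q2 l2 * pA a 0 l1 * pB b l1 l2 * pC c 0 l2) *
      ((pA 0 1 l1 + pA 1 1 l1) * hCs 1 l2 + hAs 1 l1)
  · linear_combination (-q1 l1 * q2 l2 * pA a 0 l1 * pB b l1 l2 * pC c 1 l2) *
      ((pA 0 1 l1 + pA 1 1 l1) * hCs 0 l2 + hAs 1 l1)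
  · linear_combination (-q1 l1 * q2 l2 * pA a 1 l1 * pB b l1 l2 * pC c 0 l2) *
      ((pA 0 0 l1 + pA 1 0 l1) * hCs 1 l2 + hAs 0 l1)
  · linear_combination (-q1 l1 * q2 l2 * pA a 1 l1 * pB b l1 l2 * pC c 1 l2) *
      ((pA 0 0 l1 + pA 1 0 l1) * hCs 0 l2 + hAs 0 l1)

lemma not_memS0_pMix_one {μ : ℝ} (hμ : 0 < μ) : ¬ MemS0 (pMix 1 μ) := by
  intro h
  obtain ⟨Q1, Q2, F, hQ1, hQ2, hQ1s, hQ2s, hF, hFs, h00, h01, h10, h11⟩ := h.exists_joint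
  -- Alice's outcome for input `1` and Charlie's outcome for input `0` are unbiased.
  have marginalA : Q1 0 0 + Q1 1 0 = 1 / 2 := by
    have e : (Q1 0 0 + Q1 1 0) * ∑ c0, ∑ c1, Q2 c0 c1 = ∑ b, ∑ c, pMix 1 μ 0 b c 1 0 := by
      simp only [h10]
      simp only [Fin.sum_univ_two] at hFs ⊢
      linear_combination -hFs 0 0 0 0 - hFs 0 0 0 1 - hFs 0 0 1 0 - hFs 0 0 1 1
        - hFs 1 0 0 0 - hFs 1 0 0 1 - hFs 1 0 1 0 - hFs 1 0 1 1
    rw [hQ2s, mul_one] at e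
    rw [e]
    simp [Fin.sum_univ_two, pMix, pPSbox, pPR, pLocal]
    ring
  have marginalC (c : Fin 2) : Q2 c 0 + Q2 c 1 = 1 / 2 := by
    have e : (∑ a0, ∑ a1, Q1 a0 a1) * (Q2 c 0 + Q2 c 1) = ∑ a, ∑ b, pMix 1 μ a b c 0 0 := by
      simp only [h00]
      simp only [Fin.sum_univ_two] at hFs ⊢
      linear_combination -hFs 0 0 c 0 - hFs 0 0 c 1 - hFs 0 1 c 0 - hFs 0 1 c 1
        - hFs 1 0 c 0 - hFs 1 0 c 1 - hFs 1 1 c 0 - hFs 1 1 c 1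
    rw [hQ1s, one_mul] at e
    rw [e]
    fin_cases c <;> simp [Fin.sum_univ_two, pMix, pPSbox, pPR, pLocal] <;> ring
  have F_le (a0 a1 c0 c1 : Fin 2) : F a0 a1 0 c0 c1 ≤ Q1 a0 a1 * Q2 c0 c1 := by
    rw [← hFs, Fin.sum_univ_two]
    linarith [hF a0 a1 1 c0 c1]
  have z1 := h00 1 0 0
  have z2 := h01 1 0 0
  have z3 := h11 1 0 1
  have e1 := h00 1 0 1
  have e2 := h10 0 0 0
  have e3 := h10 1 0 1
  simp [Fin.sum_univ_two, pMix, pPSbox, pPR, pLocal] at z1 z2 z3 e1 e2 e3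
  have hF0 (a0 a1 c0 c1 : Fin 2) := hF a0 a1 0 c0 c1
  have b1 : 1 / 8 ≤ Q1 1 0 * Q2 1 1 := by
    linarith [F_le 1 0 1 1, hF0 1 0 1 0, hF0 1 1 0 0, hF0 1 1 1 0, hF0 1 0 0 0,
      hF0 0 1 0 1, hF0 0 1 1 1, hF0 1 1 0 1, hF0 1 1 1 1]
  have b2 : 1 / 8 ≤ Q1 0 0 * (Q2 0 0 + Q2 0 1) := by
    linarith [F_le 0 0 0 0, F_le 0 0 0 1, hF0 1 0 0 0, hF0 1 0 0 1, hF0 1 1 0 0, hF0 1 1 0 1]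
  have b3 : μ / 8 ≤ Q1 0 1 * Q2 1 0 := by
    linarith [F_le 0 1 1 0, hF0 1 1 1 0, hF0 1 0 0 0, hF0 1 0 1 0, hF0 1 1 0 0,
      hF0 0 1 0 1, hF0 0 1 1 1, hF0 1 1 0 1, hF0 1 1 1 1]
  rw [marginalC 0] at b2
  have hQ10 : Q1 1 0 ≤ 1 / 4 := by linarith
  have hQ2 : Q2 1 0 = 0 := by
    refine le_antisymm ?_ (hQ2 1 0)
    have := mul_le_mul_of_nonneg_right hQ10 (hQ2 1 1)
    linarith [marginalC 1]
  rw [hQ2] at b3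
  linarith

lemma memS1ABo_pMix_one {μ : ℝ} (h1 : 0 < μ) (h2 : μ < 1 / 2) : MemS1ABo (pMix 1 μ) := by
  obtain ⟨β, rfl⟩ : ∃ β, μ = 2 * β := ⟨μ / 2, by ring⟩
  have hβ : 0 < 1 - β := by linarith
  have hβ' : 0 < 1 - 2 * β := by linarith
  have hβ0 : 0 < β := by linarith
  have hv : 0 ≤ β / (1 - β) := by positivity
  have hv' : β / (1 - β) ≤ 1 := by rw [div_le_one hβ]; linarith
  have he : 0 ≤ 2 * β * (1 - β) / (1 - 2 * β) := by positivity
  have he' : 2 * β * (1 - β) / (1 - 2 * β) ≤ 1 - β := by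
    rw [div_le_iff₀ hβ']
    nlinarith
  refine ⟨4, ![(1 - β / (1 - β)) / 2, β / (1 - β) / 2, β / (1 - β) / 2, (1 - β / (1 - β)) / 2],
    fun a b x l => corrBox (-β)
      ((![![1 - β, 1 - β, 1 - β, -(2 * β * (1 - β) / (1 - 2 * β))],
        ![0, 1 - β, -(1 - β), 1 - β]] : Fin 2 → Fin 4 → ℝ) x l) a b,
    detResponse, ⟨?_, ?_⟩, isNSBox_corrBox ?_, detResponse_nonneg, sum_detResponse, ?_⟩
  · intro l
    fin_cases l <;> simp <;> linarith
  · simp [Fin.sum_univ_four]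
    ring
  · intro x l
    rw [abs_neg, abs_of_pos hβ0, ← le_sub_iff_add_le', abs_le]
    fin_cases x <;> fin_cases l <;> simp <;> (try constructor) <;> linarith
  · have hne := hβ.ne'
    have hne' := hβ'.ne'
    intro a b c x z
    fin_cases a <;> fin_cases b <;> fin_cases c <;> fin_cases x <;> fin_cases z <;>
      simp [Fin.sum_univ_four, detResponse, corrBox, outcomeSign, pMix, pPSbox, pPR, pLocal] <;>
      field_simp <;> ring

lemma memS1BCo_pMix_one {μ : ℝ} (h1 : 0 < μ) (h2 : μ < 1 / 2) : MemS1BCo (pMix 1 μ) := by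
  refine ⟨4, fun _ => 1 / 4, detResponse,
    fun b c l z => corrBox ((![1 - 2 * μ, 0, 0, -1] : Fin 4 → ℝ) l)
      ((![![2 * μ, 1 - 2 * μ, -1, 0], ![0, 1, -1, 0]] : Fin 2 → Fin 4 → ℝ) z l) c b,
    ⟨fun _ => by norm_num, by norm_num⟩, detResponse_nonneg, sum_detResponse,
    (isNSBox_corrBox ?_).swap, ?_⟩
  · intro z l
    have h3 : |μ| = μ := abs_of_pos h1
    have h4 : |1 - 2 * μ| = 1 - 2 * μ := abs_of_pos (by linarith)
    fin_cases z <;> fin_cases l <;> simp [h3, h4] <;> linarith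
  · intro a b c x z
    fin_cases a <;> fin_cases b <;> fin_cases c <;> fin_cases x <;> fin_cases z <;>
      simp [Fin.sum_univ_four, detResponse, corrBox, outcomeSign, pMix, pPSbox, pPR, pLocal,
        -mul_eq_zero] <;>
      ring

/-- for `μ ∈ (0, 0.5)`, the mixture
`p_μ = μ·p_PS(1, 1/4) + (1-μ)·p_local` is minimally network nonclassical. -/
theorem mix_postquantum_MNN (μ : ℝ) (h1 : (0 : ℝ) < μ) (h2 : μ < (0.5 : ℝ)) :
    ¬ MemS0 (pMix 1 μ) ∧ MemS1ABo (pMix 1 μ) ∧ MemS1BCo (pMix 1 μ) := by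
  have h2' : μ < 1 / 2 := by norm_num at h2 ⊢; exact h2
  exact ⟨not_memS0_pMix_one h1, memS1ABo_pMix_one h1 h2', memS1BCo_pMix_one h1 h2'⟩
end
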